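/- arXiv:2004.00169 — 2 statements merged into one kernel-verified Lean document; each statement's English description precedes it below -/
import Mathlib

section
/- Let k be an algebraically closed field of characteristic zero and let g be an N-dimensional Lie algebra over k with basis x_1, …, x_N and structure constants c_{ij}^l (so ⁅x_i, x_j⁆ = Σ_l c_{ij}^l x_l). Let M be the N×N 'commutator matrix' with entries M_{ij} = Σ_l c_{ij}^l X_l in the polynomial ring k[X_1, …, X_N] (equivalently, M_{ij} is the element ⁅x_i,x_j⁆ of g viewed inside the symmetric algebra Sym(g)). Then the index of g equals N minus the rank of M computed over the fraction field of k[X_1, …, X_N]; that is, min_{f ∈ g*} dim ker(B_f) = N − rank_{Frac(k[X_1,…,X_N])}(M). -/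
/-!
The commutator matrix, evaluated at the point `(f x₁, …, f x_N)`, is the Gram matrix of the
Kirillov form `B_f`, so `dim ker B_f` is `N` minus the rank of that specialization. A rank is the
largest size of a nonzero minor: specializing can only kill minors, and over an infinite field a
nonzero maximal minor survives at some point. Hence the maximal rank of the specializations is the
rank over the fraction field.
-/

attribute [local instance 100] LieRing.ofAssociativeRing

/-- The kernel of the Kirillov form `B_f(x,y) = f ⁅x,y⁆` of a Lie algebra `L`,
namely `{y : L | ∀ x : L, f ⁅x, y⁆ = 0}`, as a submodule of `L`. -/
def kirillovKernel (k : Type*) {L : Type*} [Field k] [LieRing L] [LieAlgebra k L]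
    (f : Module.Dual k L) : Submodule k L :=
  LinearMap.ker ((LinearMap.compr₂ (LieAlgebra.ad k L).toLinearMap f).flip)

theorem det_submatrix_map {m n ι R S : Type*} [Fintype ι] [DecidableEq ι] [CommRing R] [CommRing S]
    (φ : R →+* S) (A : Matrix m n R) (r : ι → m) (c : ι → n) :
    ((A.map φ).submatrix r c).det = φ (A.submatrix r c).det :=
  (φ.map_det (A.submatrix r c)).symm

section MatrixRank

variable {m n K : Type*} [Finite m] [Fintype n] [Field K]

theorem exists_linearIndependent_row_submatrix {A : Matrix m n K} {s : ℕ} (hs : s ≤ A.rank) :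
    ∃ r : Fin s → m, LinearIndependent K (A.submatrix r id).row := by
  rw [A.rank_eq_finrank_span_row] at hs
  obtain ⟨v, hv, -, hv_indep⟩ := Submodule.exists_fun_fin_finrank_span_eq K (Set.range A.row)
  choose r hr using hv
  obtain rfl : A.row ∘ r = v := funext hr
  exact ⟨r ∘ Fin.castLE hs, hv_indep.comp _ (Fin.castLE_injective hs)⟩

theorem le_rank_iff_exists_det_submatrix_ne_zero {A : Matrix m n K} {s : ℕ} :
    s ≤ A.rank ↔ ∃ (r : Fin s → m) (c : Fin s → n), (A.submatrix r c).det ≠ 0 := by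
  constructor
  · intro hs
    obtain ⟨r, hr⟩ := exists_linearIndependent_row_submatrix hs
    have hrank : (A.submatrix r id).transpose.rank = s := by
      rw [Matrix.rank_transpose, hr.rank_matrix, Fintype.card_fin]
    obtain ⟨c, hc⟩ := exists_linearIndependent_row_submatrix hrank.ge
    have hunit : IsUnit (A.submatrix r c).transpose :=
      Matrix.linearIndependent_rows_iff_isUnit.mp hc
    rw [Matrix.isUnit_transpose, Matrix.isUnit_iff_isUnit_det] at hunit
    exact ⟨r, c, hunit.ne_zero⟩
  · rintro ⟨r, c, hdet⟩
    simpa [Matrix.rank_of_det_ne_zero hdet] using A.rank_submatrix_le r c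

theorem rank_map_le_rank_map_of_ker_le {R K' : Type*} [CommRing R] [Field K'] {φ : R →+* K}
    {ψ : R →+* K'} (h : RingHom.ker ψ ≤ RingHom.ker φ) (A : Matrix m n R) :
    (A.map φ).rank ≤ (A.map ψ).rank := by
  obtain ⟨r, c, hdet⟩ := le_rank_iff_exists_det_submatrix_ne_zero.mp (le_refl (A.map φ).rank)
  refine le_rank_iff_exists_det_submatrix_ne_zero.mpr ⟨r, c, ?_⟩
  rw [det_submatrix_map] at hdet ⊢
  exact fun hψ => hdet (h hψ)

theorem exists_rank_map_eval_eq {σ k : Type*} [Field k] [Infinite k]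
    {ψ : MvPolynomial σ k →+* K} (hψ : Function.Injective ψ)
    (A : Matrix m n (MvPolynomial σ k)) :
    ∃ v : σ → k, (A.map (MvPolynomial.eval v)).rank = (A.map ψ).rank := by
  obtain ⟨r, c, hdet⟩ := le_rank_iff_exists_det_submatrix_ne_zero.mp (le_refl (A.map ψ).rank)
  rw [det_submatrix_map] at hdet
  obtain ⟨v, hv⟩ : ∃ v, MvPolynomial.eval v (A.submatrix r c).det ≠ 0 := by
    by_contra! hzero
    have : (A.submatrix r c).det = 0 := MvPolynomial.funext fun v => by rw [hzero v, map_zero]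
    exact hdet (by rw [this, map_zero])
  refine ⟨v, (rank_map_le_rank_map_of_ker_le ?_ A).antisymm ?_⟩
  · simp [(RingHom.injective_iff_ker_eq_bot ψ).mp hψ]
  · rw [← det_submatrix_map] at hv
    exact le_rank_iff_exists_det_submatrix_ne_zero.mpr ⟨r, c, hv⟩

end MatrixRank

theorem rank_toMatrix₂_add_finrank_ker_flip {m n K V W : Type*} [Fintype m] [Fintype n]
    [DecidableEq m] [DecidableEq n] [Field K] [AddCommGroup V] [Module K V] [AddCommGroup W]
    [Module K W] (b : Module.Basis m K V) (c : Module.Basis n K W) (B : V →ₗ[K] W →ₗ[K] K) :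
    (LinearMap.toMatrix₂ b c B).rank + Module.finrank K (LinearMap.ker B.flip) =
      Fintype.card n := by
  have : FiniteDimensional K W := c.finiteDimensional_of_finite
  have hmatrix : LinearMap.toMatrix₂ b c B = LinearMap.toMatrix c b.dualBasis B.flip := by
    ext i j
    simp [LinearMap.toMatrix_apply]
  rw [hmatrix, Matrix.rank_eq_finrank_range_toLin _ b.dualBasis c, Matrix.toLin_toMatrix,
    LinearMap.finrank_range_add_finrank_ker, Module.finrank_eq_card_basis c]

section Kirillov

variable {R L ι : Type*} [CommRing R] [LieRing L] [LieAlgebra R L] [Fintype ι]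

/-- The Kirillov form `B_f(y, z) = f ⁅y, z⁆` of a linear functional `f` on a Lie algebra, encoded
as a curried bilinear map. -/
def kirillovForm (f : Module.Dual R L) : L →ₗ[R] L →ₗ[R] R :=
  LinearMap.compr₂ (LieAlgebra.ad R L).toLinearMap f

/-- The commutator matrix of a Lie algebra in a basis `x`: its entries are the brackets
`⁅x i, x j⁆`, read as linear forms in one variable `X l` for each basis vector `x l`. -/
noncomputable def commutatorMatrix (x : Module.Basis ι R L) : Matrix ι ι (MvPolynomial ι R) :=
  Matrix.of fun i j =>
    ∑ l, MvPolynomial.C (x.repr ⁅x i, x j⁆ l) * MvPolynomial.X l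

theorem commutatorMatrix_map_eval [DecidableEq ι] (x : Module.Basis ι R L)
    (f : Module.Dual R L) :
    (commutatorMatrix x).map (MvPolynomial.eval (f ∘ x)) =
      LinearMap.toMatrix₂ x x (kirillovForm f) := by
  ext i j
  calc MvPolynomial.eval (f ∘ x) (commutatorMatrix x i j)
      = ∑ l, x.repr ⁅x i, x j⁆ l * f (x l) := by simp [commutatorMatrix]
    _ = f (∑ l, x.repr ⁅x i, x j⁆ l • x l) := by simp only [map_sum, map_smul, smul_eq_mul]
    _ = f ⁅x i, x j⁆ := by rw [x.sum_repr]
    _ = LinearMap.toMatrix₂ x x (kirillovForm f) i j := by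
      simp [LinearMap.toMatrix₂_apply, kirillovForm]

theorem finrank_kirillovKernel {k : Type*} [Field k] [LieAlgebra k L] (x : Module.Basis ι k L)
    (f : Module.Dual k L) :
    Module.finrank k (kirillovKernel k f) =
      Fintype.card ι - ((commutatorMatrix x).map (MvPolynomial.eval (f ∘ x))).rank := by
  classical
  rw [commutatorMatrix_map_eval]
  exact Nat.eq_sub_of_add_eq' (rank_toMatrix₂_add_finrank_ker_flip x x (kirillovForm f))

theorem index_eq_dim_sub_rank_commutator_matrix_general {k K : Type*} [Field k] [Infinite k]
    [LieAlgebra k L] (x : Module.Basis ι k L) [Field K] [Algebra (MvPolynomial ι k) K]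
    [FaithfulSMul (MvPolynomial ι k) K] :
    ⨅ f : Module.Dual k L, Module.finrank k (kirillovKernel k f) =
      Fintype.card ι - ((commutatorMatrix x).map (algebraMap (MvPolynomial ι k) K)).rank := by
  have hinj : Function.Injective (algebraMap (MvPolynomial ι k) K) :=
    FaithfulSMul.algebraMap_injective _ _
  simp only [finrank_kirillovKernel x]
  apply le_antisymm
  · obtain ⟨v, hv⟩ := exists_rank_map_eval_eq hinj (commutatorMatrix x)
    have hf : x.constr k v ∘ x = v := funext (x.constr_basis k v)
    exact ciInf_le_of_le (OrderBot.bddBelow _) (x.constr k v) (by rw [hf, hv])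
  · refine le_ciInf fun f => Nat.sub_le_sub_left (rank_map_le_rank_map_of_ker_le ?_ _) _
    simp [(RingHom.injective_iff_ker_eq_bot _).mp hinj]

end Kirillov

/-- **Dixmier's index formula.** Let `k` be an algebraically closed field of characteristic
zero and `L` an `N`-dimensional Lie algebra over `k` with basis `x 0, …, x (N-1)`.  Let `M` be
the `N × N` commutator matrix, whose `(i,j)` entry is `⁅x i, x j⁆` written out in the basis
with the basis vectors replaced by the polynomial variables `X l`, i.e.
`M i j = ∑ l, c_{ij}^l • X l ∈ k[X_1, …, X_N]`.  Then
`ind L = min_{f ∈ L*} dim ker B_f = N - rank M`, the rank being computed over the fraction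
field of `k[X_1, …, X_N]`. -/
theorem index_eq_dim_sub_rank_commutator_matrix
    {k : Type*} [Field k] [IsAlgClosed k] [CharZero k]
    {L : Type*} [LieRing L] [LieAlgebra k L] {N : ℕ} (x : Module.Basis (Fin N) k L)
    (M : Matrix (Fin N) (Fin N) (MvPolynomial (Fin N) k))
    (hM : ∀ i j, M i j =
      ∑ l : Fin N, MvPolynomial.C (x.repr ⁅x i, x j⁆ l) * MvPolynomial.X l) :
    (⨅ f : Module.Dual k L, Module.finrank k (kirillovKernel k f)) =
      N - (M.map (algebraMap (MvPolynomial (Fin N) k)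
            (FractionRing (MvPolynomial (Fin N) k)))).rank := by
  obtain rfl : M = commutatorMatrix x := Matrix.ext hM
  simpa only [Fintype.card_fin] using index_eq_dim_sub_rank_commutator_matrix_general x
end

section
/- Let k be an algebraically closed field of characteristic zero and let Φ_n be the product of n copies of the two-dimensional non-abelian Lie algebra t₂. Then every Chevalley–Eilenberg 2-cocycle of Φ_n with coefficients in the adjoint representation is a 2-coboundary; that is, for every alternating bilinear map F : Φ_n × Φ_n → Φ_n satisfying ⁅x, F(y,z)⁆ − ⁅y, F(x,z)⁆ + ⁅z, F(x,y)⁆ − F(⁅x,y⁆, z) + F(⁅x,z⁆, y) − F(⁅y,z⁆, x) = 0 for all x, y, z ∈ Φ_n, there exists a linear map G : Φ_n → Φ_n with F(x,y) = ⁅x, G(y)⁆ − ⁅y, G(x)⁆ − G(⁅x,y⁆) for all x, y ∈ Φ_n. In other words, H²(Φ_n, Φ_n) = 0. -/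
/-- `B` is a basis exhibiting a Lie algebra as `Φ_n = t₂ × ⋯ × t₂` (`n` copies of the
two-dimensional non-abelian Lie algebra): writing `d i = B (Sum.inl i)` and
`e i = B (Sum.inr i)`, the only nonzero brackets of basis vectors are
`⁅d i, e i⁆ = e i`. -/
def IsPhiBasis {k L : Type*} [CommRing k] [LieRing L] [LieAlgebra k L] {n : ℕ}
    (B : Module.Basis (Fin n ⊕ Fin n) k L) : Prop :=
  (∀ i j : Fin n, ⁅B (Sum.inl i), B (Sum.inl j)⁆ = 0) ∧
  (∀ i j : Fin n, ⁅B (Sum.inr i), B (Sum.inr j)⁆ = 0) ∧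
  (∀ i j : Fin n, ⁅B (Sum.inl i), B (Sum.inr j)⁆ = if i = j then B (Sum.inr i) else 0)

/-!
Write `d i`, `e i` for the basis and let `L` act on cochains by the Lie derivative. By Cartan's
formula the Lie derivative of a cocycle is a coboundary. Each `ad (d i)` is diagonal with weights
`0` and `1`, so on alternating bilinear maps the Lie derivative `θ` along `d i` has weights in
`{-1, 0, 1}`: the value `-2` would need the argument `e i` twice. Hence `θ ^ 3 = θ`, the
projection `1 - θ ^ 2` onto the `θ`-invariants changes a cocycle by a coboundary, and since the
`d i` commute every cocycle is cohomologous to one invariant under all of them.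

For an invariant cocycle `F` the weights leave only `F (d i) (e j) = c i j • e j` and values
`F (d i) (d j)` in the span of the `d l`. The latter vanish because `F (d i)` is a derivation, and
then `F` is the coboundary of `d i ↦ ∑ j, c i j • d j`, `e i ↦ 0`.
-/

open LieModule.Cohomology

section LieDerivative

variable {R L M : Type*} [CommRing R] [LieRing L] [LieAlgebra R L]
  [AddCommGroup M] [Module R M] [LieRingModule L M] [LieModule R L M]

theorem lie_bilin_apply_apply (x : L) (F : L →ₗ[R] L →ₗ[R] M) (y z : L) :
    ⁅x, F⁆ y z = ⁅x, F y z⁆ - F y ⁅x, z⁆ - F ⁅x, y⁆ z := by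
  rw [LieHom.lie_apply, LinearMap.sub_apply, LieHom.lie_apply]

theorem lie_coe_d₁₂ (x : L) (G : L →ₗ[R] M) :
    ⁅x, (d₁₂ R L M G : L →ₗ[R] L →ₗ[R] M)⁆ = d₁₂ R L M ⁅x, G⁆ := by
  ext y z
  rw [lie_bilin_apply_apply]
  simp only [d₁₂_apply_coe_apply_apply, LieHom.lie_apply, lie_sub, lie_lie, map_sub]
  abel

/-- Cartan's formula `θ x = δ ∘ ι x + ι x ∘ δ`, evaluated on a cocycle. -/
theorem lie_coe_eq_d₁₂_of_mem_twoCocycle {F : twoCochain R L M} (hF : F ∈ twoCocycle R L M)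
    (x : L) : ⁅x, (F : L →ₗ[R] L →ₗ[R] M)⁆ = d₁₂ R L M (F x) := by
  ext y z
  have hxyz : d₂₃ R L M F x y z = 0 := by rw [(mem_twoCocycle_iff R L M F).mp hF]; rfl
  rw [d₂₃_apply, ← twoCochain_skew F y ⁅x, z⁆, ← twoCochain_skew F x ⁅y, z⁆] at hxyz
  rw [lie_bilin_apply_apply, d₁₂_apply_coe_apply_apply, ← sub_eq_zero, ← hxyz]
  simp only [twoCochain_val_apply]
  abel

theorem d₁₂_mem_twoCocycle (G : L →ₗ[R] M) : d₁₂ R L M G ∈ twoCocycle R L M :=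
  (mem_twoCocycle_iff R L M _).mpr (LinearMap.congr_fun (d₂₃_comp_d₁₂ R L M) G)

theorem lie_lie_comm_of_lie_eq_zero {N : Type*} [AddCommGroup N] [LieRingModule L N] {x y : L}
    (hxy : ⁅x, y⁆ = 0) (m : N) : ⁅x, ⁅y, m⁆⁆ = ⁅y, ⁅x, m⁆⁆ := by
  rw [leibniz_lie, hxy, zero_lie, zero_add]

theorem exists_forall_lie_coe_add_d₁₂_eq_zero {ι : Type*} {t : ι → L}
    (hcomm : ∀ i j, ⁅t i, t j⁆ = 0)
    (hcube : ∀ i (F : twoCochain R L M), ⁅t i, ⁅t i, ⁅t i, F.val⁆⁆⁆ = ⁅t i, F.val⁆)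
    {F : twoCochain R L M} (hF : F ∈ twoCocycle R L M) (s : Finset ι) :
    ∃ G : L →ₗ[R] M, ∀ i ∈ s, ⁅t i, (F + d₁₂ R L M G).val⁆ = 0 := by
  classical
  induction s using Finset.induction_on with
  | empty => exact ⟨0, by simp⟩
  | insert i s _ ih =>
    obtain ⟨G, hG⟩ := ih
    set F' := F + d₁₂ R L M G with hF'
    have hF'_mem : F' ∈ twoCocycle R L M := add_mem hF (d₁₂_mem_twoCocycle G)
    have hproj : (F + d₁₂ R L M (G + ⁅-t i, F' (t i)⁆)).val = F'.val - ⁅t i, ⁅t i, F'.val⁆⁆ := by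
      rw [map_add, ← add_assoc, ← hF', Submodule.coe_add, ← lie_coe_d₁₂,
        ← lie_coe_eq_d₁₂_of_mem_twoCocycle hF'_mem, neg_lie, sub_eq_add_neg]
    refine ⟨G + ⁅-t i, F' (t i)⁆, fun j hj => ?_⟩
    rw [hproj, lie_sub]
    rcases Finset.mem_insert.mp hj with rfl | hj
    · rw [hcube, sub_self]
    · rw [lie_lie_comm_of_lie_eq_zero (hcomm j i), lie_lie_comm_of_lie_eq_zero (hcomm j i),
        hG j hj, lie_zero, lie_zero, sub_zero]

end LieDerivative

section Weights

variable {R L M : Type*} [CommRing R] [LieRing L] [LieAlgebra R L]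
  [AddCommGroup M] [Module R M] [LieRingModule L M] [LieModule R L M]
  {κ : Type*} (C : Module.Basis κ R M) {t : L} {w : κ → R}

theorem repr_lie_of_forall_lie_eq_smul (hw : ∀ c, ⁅t, C c⁆ = w c • C c) (m : M) (c : κ) :
    C.repr ⁅t, m⁆ c = w c * C.repr m c := by
  suffices C.coord c ∘ₗ LieModule.toEnd R L M t = w c • C.coord c from
    LinearMap.congr_fun this m
  refine C.ext fun b => ?_
  obtain rfl | hbc := eq_or_ne b c <;> simp [*]

theorem repr_lie_bilin_apply_apply (hw : ∀ c, ⁅t, C c⁆ = w c • C c) {x y : L} {α β : R}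
    (hx : ⁅t, x⁆ = α • x) (hy : ⁅t, y⁆ = β • y) (F : L →ₗ[R] L →ₗ[R] M) (c : κ) :
    C.repr (⁅t, F⁆ x y) c = (w c - α - β) * C.repr (F x y) c := by
  simp only [lie_bilin_apply_apply, hx, hy, map_sub, map_smul, LinearMap.smul_apply,
    Finsupp.sub_apply, Finsupp.smul_apply, smul_eq_mul, repr_lie_of_forall_lie_eq_smul C hw]
  ring

end Weights

theorem twoCochain_ext_sum {R L M ι κ : Type*} [CommRing R] [LieRing L] [LieAlgebra R L]
    [AddCommGroup M] [Module R M] (B : Module.Basis (ι ⊕ κ) R L) {F F' : twoCochain R L M}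
    (hll : ∀ i j, F (B (.inl i)) (B (.inl j)) = F' (B (.inl i)) (B (.inl j)))
    (hlr : ∀ i j, F (B (.inl i)) (B (.inr j)) = F' (B (.inl i)) (B (.inr j)))
    (hrr : ∀ i j, F (B (.inr i)) (B (.inr j)) = F' (B (.inr i)) (B (.inr j))) : F = F' := by
  refine Subtype.ext (LinearMap.ext_basis B B ?_)
  rintro (i | i) (j | j)
  · exact hll i j
  · exact hlr i j
  · simp only [twoCochain_val_apply, ← twoCochain_skew _ (B (.inl j)), hlr]
  · exact hrr i j

/-- The weights of the basis of `Φ_n` under `ad (d i)`: `1` at `e i` and `0` at every other basis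
vector. -/
def phiWeight (k : Type*) [CommRing k] {n : ℕ} (i : Fin n) : Fin n ⊕ Fin n → k :=
  Pi.single (Sum.inr i) 1

theorem phiWeight_inl (k : Type*) [CommRing k] {n : ℕ} (i j : Fin n) :
    phiWeight k i (.inl j) = 0 :=
  Pi.single_eq_of_ne Sum.inl_ne_inr 1

theorem phiWeight_inr_self (k : Type*) [CommRing k] {n : ℕ} (i : Fin n) :
    phiWeight k i (.inr i) = 1 :=
  Pi.single_eq_same _ _

theorem phiWeight_inr_of_ne (k : Type*) [CommRing k] {n : ℕ} {i j : Fin n} (h : j ≠ i) :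
    phiWeight k i (.inr j) = 0 :=
  Pi.single_eq_of_ne (Sum.inr_injective.ne h) 1

theorem phiWeight_sub_sub_pow_three (k : Type*) [CommRing k] {n : ℕ} (i : Fin n)
    {a b : Fin n ⊕ Fin n} (hab : a ≠ b) (c : Fin n ⊕ Fin n) :
    (phiWeight k i c - phiWeight k i a - phiWeight k i b) ^ 3 =
      phiWeight k i c - phiWeight k i a - phiWeight k i b := by
  obtain rfl | ha := eq_or_ne a (.inr i)
  · simp only [phiWeight, Pi.single_apply, hab.symm, if_true, if_false]
    split_ifs <;> ring
  · simp only [phiWeight, Pi.single_apply, ha, if_false]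
    split_ifs <;> ring

namespace IsPhiBasis

variable {k L : Type*} [CommRing k] [LieRing L] [LieAlgebra k L] {n : ℕ}
  {B : Module.Basis (Fin n ⊕ Fin n) k L}

theorem lie_inl_basis (hB : IsPhiBasis B) (i : Fin n) (a : Fin n ⊕ Fin n) :
    ⁅B (.inl i), B a⁆ = phiWeight k i a • B a := by
  rcases a with j | j
  · rw [hB.1, phiWeight_inl, zero_smul]
  · rw [hB.2.2]
    split_ifs with hij
    · rw [← hij, phiWeight_inr_self, one_smul]
    · rw [phiWeight_inr_of_ne k (Ne.symm hij), zero_smul]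

theorem lie_inr (hB : IsPhiBasis B) (i : Fin n) (v : L) :
    ⁅B (.inr i), v⁆ = -B.repr v (.inl i) • B (.inr i) := by
  suffices (LieAlgebra.ad k L (B (.inr i)) : L →ₗ[k] L) =
      (-B.coord (.inl i)).smulRight (B (.inr i)) by
    simpa using LinearMap.congr_fun this v
  refine B.ext ?_
  rintro (j | j)
  · rw [LieAlgebra.ad_apply, ← lie_skew, hB.2.2]
    obtain rfl | hij := eq_or_ne i j <;> simp [*, Ne.symm]
  · simp [hB.2.1]

theorem repr_lie_inl_bilin_basis (hB : IsPhiBasis B) (F : L →ₗ[k] L →ₗ[k] L) (i : Fin n)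
    (a b c : Fin n ⊕ Fin n) :
    B.repr (⁅B (.inl i), F⁆ (B a) (B b)) c =
      (phiWeight k i c - phiWeight k i a - phiWeight k i b) * B.repr (F (B a) (B b)) c :=
  repr_lie_bilin_apply_apply B (hB.lie_inl_basis i) (hB.lie_inl_basis i a) (hB.lie_inl_basis i b)
    F c

theorem lie_inl_lie_lie_coe (hB : IsPhiBasis B) (i : Fin n) (F : twoCochain k L L) :
    ⁅B (.inl i), ⁅B (.inl i), ⁅B (.inl i), F.val⁆⁆⁆ = ⁅B (.inl i), F.val⁆ := by
  refine LinearMap.ext_basis B B fun a b => B.ext_elem fun c => ?_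
  simp only [hB.repr_lie_inl_bilin_basis]
  obtain rfl | hab := eq_or_ne a b
  · simp
  · linear_combination
      B.repr (F (B a) (B b)) c * phiWeight_sub_sub_pow_three k i hab c

section Invariant

variable {F : twoCochain k L L}

theorem repr_apply_apply_eq_zero (hB : IsPhiBasis B) {i : Fin n}
    (hF : ⁅B (.inl i), F.val⁆ = 0) {a b c : Fin n ⊕ Fin n}
    (hw : IsUnit (phiWeight k i c - phiWeight k i a - phiWeight k i b)) :
    B.repr (F (B a) (B b)) c = 0 := by
  have h := hB.repr_lie_inl_bilin_basis F.val i a b c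
  rw [hF] at h
  exact hw.mul_right_eq_zero.mp (by simpa using h.symm)

theorem apply_inr_inr_eq_zero (hB : IsPhiBasis B) (hF : ∀ i, ⁅B (.inl i), F.val⁆ = 0)
    (i j : Fin n) : F (B (.inr i)) (B (.inr j)) = 0 := by
  obtain rfl | hij := eq_or_ne i j
  · exact twoCochain_alt F _
  refine B.ext_elem fun c => ?_
  rw [map_zero, Finsupp.zero_apply]
  obtain rfl | hc := eq_or_ne c (.inr i)
  · refine hB.repr_apply_apply_eq_zero (hF j) ?_
    simp [phiWeight_inr_self, phiWeight_inr_of_ne k hij]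
  · refine hB.repr_apply_apply_eq_zero (hF i) ?_
    simp [phiWeight, hc, hij.symm]

theorem apply_inl_inr (hB : IsPhiBasis B) (hF : ∀ i, ⁅B (.inl i), F.val⁆ = 0) (i j : Fin n) :
    F (B (.inl i)) (B (.inr j)) =
      B.repr (F (B (.inl i)) (B (.inr j))) (.inr j) • B (.inr j) := by
  refine B.ext_elem fun c => ?_
  obtain rfl | hc := eq_or_ne c (.inr j)
  · simp
  · rw [hB.repr_apply_apply_eq_zero (hF j) (by simp [phiWeight, hc])]
    simp [hc]

theorem apply_inl_inl_eq_zero (hB : IsPhiBasis B) (hF : ∀ i, ⁅B (.inl i), F.val⁆ = 0)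
    (hF_mem : F ∈ twoCocycle k L L) (i j : Fin n) : F (B (.inl i)) (B (.inl j)) = 0 := by
  have hderiv (y z : L) :
      ⁅y, F (B (.inl i)) z⁆ - ⁅z, F (B (.inl i)) y⁆ - F (B (.inl i)) ⁅y, z⁆ = 0 := by
    rw [← d₁₂_apply_coe_apply_apply, ← lie_coe_eq_d₁₂_of_mem_twoCocycle hF_mem, hF]
    rfl
  refine B.ext_elem ?_
  rw [map_zero]
  rintro (l | l)
  · have h := hderiv (B (.inl j)) (B (.inr l))
    rw [hB.lie_inl_basis, map_smul, hB.apply_inl_inr hF, lie_smul, hB.lie_inl_basis, smul_comm,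
      sub_right_comm, sub_self, zero_sub, neg_eq_zero, hB.lie_inr] at h
    simpa using congrArg (B.repr · (.inr l)) h
  · exact hB.repr_apply_apply_eq_zero (hF l) (by simp [phiWeight])

end Invariant

theorem mem_range_d₁₂_of_forall_lie_eq_zero (hB : IsPhiBasis B) {F : twoCochain k L L}
    (hF : ∀ i, ⁅B (.inl i), F.val⁆ = 0) (hF_mem : F ∈ twoCocycle k L L) :
    F ∈ LinearMap.range (d₁₂ k L L) := by
  let c (i j : Fin n) : k := B.repr (F (B (.inl i)) (B (.inr j))) (.inr j)
  let G : L →ₗ[k] L := B.constr k (Sum.elim (fun i => ∑ j, c i j • B (.inl j)) 0)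
  have hG_inl (i : Fin n) : G (B (.inl i)) = ∑ j, c i j • B (.inl j) := by simp [G]
  have hG_inr (i : Fin n) : G (B (.inr i)) = 0 := by simp [G]
  refine ⟨G, twoCochain_ext_sum B (fun i j => ?_) (fun i j => ?_) (fun i j => ?_)⟩
  · rw [hB.apply_inl_inl_eq_zero hF hF_mem]
    simp [hG_inl, lie_sum, hB.1]
  · have hrepr : B.repr (G (B (.inl i))) (.inl j) = c i j := by
      simp [hG_inl, Finsupp.single_apply]
    rw [hB.apply_inl_inr hF, d₁₂_apply_apply, hB.lie_inl_basis, map_smul, hG_inr, hB.lie_inr,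
      hrepr]
    simp [c]
  · rw [hB.apply_inr_inr_eq_zero hF]
    simp [hG_inr, hB.2.1]

theorem twoCocycle_le_range_d₁₂ (hB : IsPhiBasis B) :
    twoCocycle k L L ≤ LinearMap.range (d₁₂ k L L) := by
  intro F hF
  obtain ⟨G, hG⟩ := exists_forall_lie_coe_add_d₁₂_eq_zero hB.1 hB.lie_inl_lie_lie_coe hF .univ
  obtain ⟨H, hH⟩ := hB.mem_range_d₁₂_of_forall_lie_eq_zero (fun i => hG i (Finset.mem_univ i))
    (add_mem hF (d₁₂_mem_twoCocycle G))
  refine ⟨H + -G, ?_⟩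
  rw [map_add, hH, add_assoc, ← map_add, add_neg_cancel, map_zero, add_zero]

end IsPhiBasis

theorem phi_second_cohomology_trivial_general
    {k : Type*} [CommRing k] {L : Type*} [LieRing L] [LieAlgebra k L]
    {n : ℕ} (B : Module.Basis (Fin n ⊕ Fin n) k L) (hB : IsPhiBasis B)
    (F : L →ₗ[k] L →ₗ[k] L) (halt : ∀ x : L, F x x = 0)
    (hcocycle : ∀ x y z : L,
      ⁅x, F y z⁆ - ⁅y, F x z⁆ + ⁅z, F x y⁆ - F ⁅x, y⁆ z + F ⁅x, z⁆ y - F ⁅y, z⁆ x = 0) :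
    ∃ G : L →ₗ[k] L, ∀ x y : L, F x y = ⁅x, G y⁆ - ⁅y, G x⁆ - G ⁅x, y⁆ := by
  let F' : twoCochain k L L := ⟨F, halt⟩
  have hF' : F' ∈ twoCocycle k L L :=
    (mem_twoCocycle_iff k L L F').mpr (LinearMap.ext fun x => LinearMap.ext₂ (hcocycle x))
  obtain ⟨G, hG⟩ := hB.twoCocycle_le_range_d₁₂ hF'
  exact ⟨G, fun x y => congrArg (fun H : twoCochain k L L => H x y) hG.symm⟩

/-- **Rigidity theorem for `Φ_n`.**  `H²(Φ_n, Φ_n) = 0`: every Chevalley–Eilenberg 2-cocycle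
of `Φ_n` (the product of `n` copies of the two-dimensional non-abelian Lie algebra `t₂`) with
coefficients in the adjoint representation is a 2-coboundary. -/
theorem phi_second_cohomology_trivial
    {k : Type*} [Field k] [IsAlgClosed k] [CharZero k]
    {L : Type*} [LieRing L] [LieAlgebra k L]
    {n : ℕ} (B : Module.Basis (Fin n ⊕ Fin n) k L) (hB : IsPhiBasis B)
    (F : L →ₗ[k] L →ₗ[k] L) (halt : ∀ x : L, F x x = 0)
    (hcocycle : ∀ x y z : L,
      ⁅x, F y z⁆ - ⁅y, F x z⁆ + ⁅z, F x y⁆ - F ⁅x, y⁆ z + F ⁅x, z⁆ y - F ⁅y, z⁆ x = 0) :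
    ∃ G : L →ₗ[k] L, ∀ x y : L, F x y = ⁅x, G y⁆ - ⁅y, G x⁆ - G ⁅x, y⁆ := by
  exact phi_second_cohomology_trivial_general B hB F halt hcocycle
end
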